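/- Error bound for the QOT dual: for every pair of bounded measurable functions f : Ω → ℝ and g : Ω′ → ℝ, ‖f⊕g − f*⊕g*‖_{L²(P⊗Q)} ≤ γ_ε · max(‖f⊕g − f*⊕g*‖_∞, ε) · ‖DΓ(f,g)‖_{L²(P)×L²(Q)}. -/

import Mathlib

open MeasureTheory Metric
open scoped ENNReal

/-- First gradient component `D₁Γ(f,g)(x) = 1 - (1/ε) ∫ (f(x)+g(y)-c(x,y))₊ dQ(y)`. -/
noncomputable def D1Gamma {d : ℕ} (ε : ℝ) (Q : Measure (EuclideanSpace ℝ (Fin d)))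
    (c : EuclideanSpace ℝ (Fin d) → EuclideanSpace ℝ (Fin d) → ℝ)
    (f g : EuclideanSpace ℝ (Fin d) → ℝ) : EuclideanSpace ℝ (Fin d) → ℝ :=
  fun x => 1 - (1 / ε) * ∫ y, max (f x + g y - c x y) 0 ∂Q

/-- Second gradient component `D₂Γ(f,g)(y) = 1 - (1/ε) ∫ (f(x)+g(y)-c(x,y))₊ dP(x)`. -/
noncomputable def D2Gamma {d : ℕ} (ε : ℝ) (P : Measure (EuclideanSpace ℝ (Fin d)))
    (c : EuclideanSpace ℝ (Fin d) → EuclideanSpace ℝ (Fin d) → ℝ)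
    (f g : EuclideanSpace ℝ (Fin d) → ℝ) : EuclideanSpace ℝ (Fin d) → ℝ :=
  fun y => 1 - (1 / ε) * ∫ x, max (f x + g y - c x y) 0 ∂P

/-- The explicit constant `γ_ε` of the PL inequality. -/
noncomputable def gammaEps {d : ℕ} (ε L δP lamP LamP : ℝ)
    (Ω Ω' : Set (EuclideanSpace ℝ (Fin d))) (Q : Measure (EuclideanSpace ℝ (Fin d))) : ℝ :=
  16 * (δP⁻¹ * (max (8 * L / ε) 1) ^ d) * (LamP ^ 2 / lamP ^ 2) *
    (⌈8 * L * Metric.diam Ω / ε⌉ : ℝ) ^ (d + 2) /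
    (⨅ y : Ω', (Q (Metric.ball (y : EuclideanSpace ℝ (Fin d)) (ε / (8 * L)))).toReal)


lemma qot_A2 {d : ℕ} (Ω : Set (EuclideanSpace ℝ (Fin d))) (hΩm : MeasurableSet Ω)
    (hconv : Convex ℝ Ω) (P : Measure (EuclideanSpace ℝ (Fin d)))
    (lam Lam : ℝ) (hlam : 0 < lam) (hLam : 0 < Lam)
    (hPu : P ≤ ENNReal.ofReal Lam • volume.restrict Ω)
    (hPl : ENNReal.ofReal lam • volume.restrict Ω ≤ P)
    (H : EuclideanSpace ℝ (Fin d) → ℝ≥0∞) (hH : Measurable H)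
    (x : EuclideanSpace ℝ (Fin d)) (hx : x ∈ Ω) (t : ℝ) (ht : 0 < t) (ht1 : t ≤ 1) :
    ∫⁻ x', H (x + t • (x' - x)) ∂P ≤ ENNReal.ofReal (Lam / lam * (t ^ d)⁻¹) * ∫⁻ z, H z ∂P := by
  have hG : Measurable (Ω.indicator H) := hH.indicator hΩm
  have e1 : ∫⁻ x', (Ω.indicator H) (x + t • (x' - x)) =
      ENNReal.ofReal ((t ^ d)⁻¹) * ∫⁻ z, Ω.indicator H z := by
    rw [lintegral_sub_right_eq_self (fun x' => (Ω.indicator H) (x + t • x')) x]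
    have h2 := lintegral_map (μ := (volume : Measure (EuclideanSpace ℝ (Fin d))))
      (f := fun z => (Ω.indicator H) (x + z)) (g := fun z => t • z)
      (hG.comp (measurable_const_add x)) (measurable_const_smul t)
    rw [← h2]
    have h3 : Measure.map (fun z => t • z) (volume : Measure (EuclideanSpace ℝ (Fin d))) =
       _ := Measure.map_addHaar_smul (volume : Measure (EuclideanSpace ℝ (Fin d))) ht.ne'
    rw [h3, lintegral_smul_measure, lintegral_add_left_eq_self]
    rw [finrank_euclideanSpace, Fintype.card_fin, abs_of_pos (by positivity), smul_eq_mul]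
  have e2 : ∫⁻ x', H (x + t • (x' - x)) ∂P ≤
      ENNReal.ofReal Lam * ∫⁻ x', (Ω.indicator H) (x + t • (x' - x)) := by
    calc _ ≤ ∫⁻ x', H (x + t • (x' - x)) ∂(ENNReal.ofReal Lam • volume.restrict Ω) :=
          lintegral_mono' hPu le_rfl
      _ = ENNReal.ofReal Lam * ∫⁻ x' in Ω, H (x + t • (x' - x)) := by
          rw [lintegral_smul_measure, smul_eq_mul]
      _ ≤ ENNReal.ofReal Lam * ∫⁻ x' in Ω, (Ω.indicator H) (x + t • (x' - x)) := by
          gcongr 1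
          apply setLIntegral_mono' hΩm
          intro x' hx'
          rw [Set.indicator_of_mem]
          exact hconv.add_smul_sub_mem hx hx' ⟨ht.le, ht1⟩
      _ ≤ _ := by
          gcongr 1
          exact setLIntegral_le_lintegral _ _
  have e3 : ENNReal.ofReal lam * ∫⁻ z, Ω.indicator H z ≤ ∫⁻ z, H z ∂P := by
    rw [lintegral_indicator hΩm, ← smul_eq_mul, ← lintegral_smul_measure]
    exact lintegral_mono' hPl le_rfl
  rw [e1] at e2
  refine e2.trans ?_
  have : ENNReal.ofReal (Lam / lam * (t ^ d)⁻¹) * ENNReal.ofReal lam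
      = ENNReal.ofReal Lam * ENNReal.ofReal ((t ^ d)⁻¹) := by
    rw [← ENNReal.ofReal_mul (by positivity), ← ENNReal.ofReal_mul (by positivity)]
    congr 1
    field_simp
  calc _ = ENNReal.ofReal (Lam / lam * (t ^ d)⁻¹) * (ENNReal.ofReal lam * ∫⁻ z, Ω.indicator H z) := by
        rw [← mul_assoc, ← mul_assoc, this]
    _ ≤ _ := by gcongr

lemma qot_sq_two (A B : ℝ) : ENNReal.ofReal ((A - B) ^ 2) ≤
    2 * (ENNReal.ofReal (A ^ 2) + ENNReal.ofReal (B ^ 2)) := by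
  rw [← ENNReal.ofReal_add (by positivity) (by positivity),
    show (2 : ℝ≥0∞) = ENNReal.ofReal 2 by simp, ← ENNReal.ofReal_mul (by norm_num)]
  apply ENNReal.ofReal_le_ofReal
  nlinarith [sq_nonneg (A + B)]

/-- discrete chain inequality -/
lemma qot_chain (K : ℕ) (s : ℕ → ℝ) : (s 0 - s K) ^ 2 ≤
    K * ∑ k ∈ Finset.range K, (s k - s (k + 1)) ^ 2 := by
  have h := sq_sum_le_card_mul_sum_sq (s := Finset.range K) (f := fun k => s k - s (k + 1))
  rw [Finset.sum_range_sub'] at h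
  simpa using h

lemma qot_A1 {E : Type*} [PseudoMetricSpace E] [MeasurableSpace E] [OpensMeasurableSpace E]
    (Q : Measure E) (a b : E → ℝ) (hb : Measurable b) (S : Set (E × E))
    (r : ℝ) (q : ℝ≥0∞) (u v y0 : E) (hq : q ≤ Q (ball y0 r))
    (hu : ∀ y ∈ ball y0 r, (u, y) ∈ S) (hv : ∀ y ∈ ball y0 r, (v, y) ∈ S) :
    q * ENNReal.ofReal ((a u - a v) ^ 2) ≤
      2 * (∫⁻ y, S.indicator (fun z => ENNReal.ofReal ((a z.1 + b z.2) ^ 2)) (u, y) ∂Q +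
        ∫⁻ y, S.indicator (fun z => ENNReal.ofReal ((a z.1 + b z.2) ^ 2)) (v, y) ∂Q) := by
  have hm : ∀ w, (∀ y ∈ ball y0 r, (w, y) ∈ S) →
      ∫⁻ y in ball y0 r, ENNReal.ofReal ((a w + b y) ^ 2) ∂Q ≤
      ∫⁻ y, S.indicator (fun z => ENNReal.ofReal ((a z.1 + b z.2) ^ 2)) (w, y) ∂Q := by
    intro w hw
    refine le_trans ?_ (setLIntegral_le_lintegral (ball y0 r) _)
    apply setLIntegral_mono' measurableSet_ball
    intro y hy
    rw [Set.indicator_of_mem (hw y hy)]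
  calc _ ≤ ENNReal.ofReal ((a u - a v) ^ 2) * Q (ball y0 r) := by rw [mul_comm]; gcongr
    _ = ∫⁻ y in ball y0 r, ENNReal.ofReal ((a u - a v) ^ 2) ∂Q := by rw [setLIntegral_const]
    _ ≤ ∫⁻ y in ball y0 r, 2 * (ENNReal.ofReal ((a u + b y) ^ 2) +
          ENNReal.ofReal ((a v + b y) ^ 2)) ∂Q := by
        apply lintegral_mono
        intro y
        have := qot_sq_two (a u + b y) (a v + b y)
        simpa using this
    _ = 2 * (∫⁻ y in ball y0 r, ENNReal.ofReal ((a u + b y) ^ 2) ∂Q +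
          ∫⁻ y in ball y0 r, ENNReal.ofReal ((a v + b y) ^ 2) ∂Q) := by
        rw [lintegral_const_mul _ (by fun_prop), lintegral_add_left (by fun_prop)]
    _ ≤ _ := mul_le_mul_right (add_le_add (hm u hu) (hm v hv)) 2

lemma qot_A3 {d : ℕ} (Ω : Set (EuclideanSpace ℝ (Fin d))) (hΩm : MeasurableSet Ω)
    (hconv : Convex ℝ Ω) (P : Measure (EuclideanSpace ℝ (Fin d))) [IsProbabilityMeasure P]
    (lam Lam : ℝ) (hlam : 0 < lam) (hLam : lam ≤ Lam)
    (hPu : P ≤ ENNReal.ofReal Lam • volume.restrict Ω)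
    (hPl : ENNReal.ofReal lam • volume.restrict Ω ≤ P)
    (hPΩ : ∀ᵐ x ∂P, x ∈ Ω)
    (H : EuclideanSpace ℝ (Fin d) → ℝ≥0∞) (hH : Measurable H)
    (a : EuclideanSpace ℝ (Fin d) → ℝ) (q : ℝ≥0∞)
    (K : ℕ) (hK : 1 ≤ K) (r : ℝ) (hr : ∀ x ∈ Ω, ∀ x' ∈ Ω, dist x x' ≤ K * r)
    (h1 : ∀ u ∈ Ω, ∀ v ∈ Ω, dist u v ≤ r →
      q * ENNReal.ofReal ((a u - a v) ^ 2) ≤ 2 * (H u + H v)) :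
    q * ∫⁻ x, ∫⁻ x', ENNReal.ofReal ((a x - a x') ^ 2) ∂P ∂P ≤
      4 * ENNReal.ofReal (Lam / lam * K ^ (d + 2)) * ∫⁻ x, H x ∂P := by
  have hK0 : (0 : ℝ) < K := by exact_mod_cast hK
  have hK1 : (1 : ℝ) ≤ K := by exact_mod_cast hK
  set I := ∫⁻ x, H x ∂P with hI
  set C := ENNReal.ofReal (Lam / lam * K ^ d) with hC
  have hLam0 : 0 < Lam := hlam.trans_le hLam
  have hC1 : 1 ≤ C := by
    rw [hC, ← ENNReal.ofReal_one]
    apply ENNReal.ofReal_le_ofReal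
    have : 1 ≤ Lam / lam := by rwa [one_le_div hlam]
    have h2 : (1 : ℝ) ≤ K ^ d := one_le_pow₀ hK1
    nlinarith
  let pt : ℕ → EuclideanSpace ℝ (Fin d) → EuclideanSpace ℝ (Fin d) → EuclideanSpace ℝ (Fin d) :=
    fun k x x' => x + ((k : ℝ) / K) • (x' - x)
  have hptm : ∀ k, Measurable (fun z : EuclideanSpace ℝ (Fin d) × EuclideanSpace ℝ (Fin d) =>
      H (pt k z.1 z.2)) := by
    intro k
    apply hH.comp
    simp only [pt]
    fun_prop
  have hptmem : ∀ k ≤ K, ∀ x ∈ Ω, ∀ x' ∈ Ω, pt k x x' ∈ Ω := by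
    intro k hk x hx x' hx'
    apply hconv.add_smul_sub_mem hx hx'
    constructor
    · positivity
    · rw [div_le_one hK0]; exact_mod_cast hk
  have hA2 : ∀ k ≤ K, ∫⁻ x, ∫⁻ x', H (pt k x x') ∂P ∂P ≤ C * I := by
    intro k hk
    rcases Nat.eq_zero_or_pos k with rfl | hk0
    · simp only [pt, Nat.cast_zero, zero_div, zero_smul, add_zero, lintegral_const, measure_univ,
        mul_one]
      exact le_mul_of_one_le_left zero_le hC1
    · calc _ ≤ ∫⁻ x, C * I ∂P := by
            apply lintegral_mono_ae
            filter_upwards [hPΩ] with x hx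
            have hk1 : (1 : ℝ) ≤ k := by exact_mod_cast hk0
            refine (qot_A2 Ω hΩm hconv P lam Lam hlam hLam0 hPu hPl H hH x hx ((k : ℝ) / K)
              (by positivity) (by rw [div_le_one hK0]; exact_mod_cast hk)).trans ?_
            gcongr 1
            apply ENNReal.ofReal_le_ofReal
            gcongr
            rw [← inv_pow]
            gcongr
            rw [inv_div]
            exact div_le_self hK0.le hk1
        _ = C * I := by simp
  have hpw : ∀ x ∈ Ω, ∀ x' ∈ Ω, q * ENNReal.ofReal ((a x - a x') ^ 2) ≤
      K * ∑ k ∈ Finset.range K, 2 * (H (pt k x x') + H (pt (k + 1) x x')) := by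
    intro x hx x' hx'
    have hch := qot_chain K (fun k => a (pt k x x'))
    have e0 : pt 0 x x' = x := by simp [pt]
    have eK : pt K x x' = x' := by simp [pt, div_self hK0.ne']
    simp only [e0, eK] at hch
    calc _ ≤ q * ENNReal.ofReal (K * ∑ k ∈ Finset.range K, (a (pt k x x') - a (pt (k + 1) x x')) ^ 2) := by
          gcongr
      _ = K * ∑ k ∈ Finset.range K, q * ENNReal.ofReal ((a (pt k x x') - a (pt (k + 1) x x')) ^ 2) := by
          rw [ENNReal.ofReal_mul (by positivity), ENNReal.ofReal_natCast,
            ENNReal.ofReal_sum_of_nonneg (fun _ _ => sq_nonneg _), Finset.mul_sum, Finset.mul_sum,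
            Finset.mul_sum]
          apply Finset.sum_congr rfl
          intro k _
          ring
      _ ≤ _ := by
          refine mul_le_mul_right (Finset.sum_le_sum fun k hk => ?_) _
          have hk' := Finset.mem_range.1 hk
          apply h1 _ (hptmem k hk'.le x hx x' hx') _ (hptmem (k + 1) hk' x hx x' hx')
          have : pt k x x' - pt (k + 1) x x' = (-(1 / K) : ℝ) • (x' - x) := by
            simp only [pt, add_sub_add_left_eq_sub, ← sub_smul]
            congr 1
            push_cast
            ring
          rw [dist_eq_norm, this, norm_smul, ← dist_eq_norm, norm_neg, Real.norm_of_nonneg (by positivity)]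
          have := hr x' hx' x hx
          rw [one_div, inv_mul_le_iff₀ hK0]
          exact this
  calc q * ∫⁻ x, ∫⁻ x', ENNReal.ofReal ((a x - a x') ^ 2) ∂P ∂P
      ≤ ∫⁻ x, ∫⁻ x', q * ENNReal.ofReal ((a x - a x') ^ 2) ∂P ∂P := by
        refine (lintegral_const_mul_le _ _).trans ?_
        apply lintegral_mono
        intro x
        exact lintegral_const_mul_le _ _
    _ ≤ ∫⁻ x, ∫⁻ x', K * ∑ k ∈ Finset.range K, 2 * (H (pt k x x') + H (pt (k + 1) x x')) ∂P ∂P := by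
        apply lintegral_mono_ae
        filter_upwards [hPΩ] with x hx
        apply lintegral_mono_ae
        filter_upwards [hPΩ] with x' hx'
        exact hpw x hx x' hx'
    _ = K * ∑ k ∈ Finset.range K, 2 * (∫⁻ x, ∫⁻ x', H (pt k x x') ∂P ∂P +
          ∫⁻ x, ∫⁻ x', H (pt (k + 1) x x') ∂P ∂P) := by
        have hm1 : ∀ k x, Measurable (fun x' => H (pt k x x')) := fun k x =>
          (hptm k).comp measurable_prodMk_left
        have hm2 : ∀ k, Measurable (fun x => ∫⁻ x', H (pt k x x') ∂P) := fun k =>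
          (hptm k).lintegral_prod_right'
        have hm1' : ∀ k x, Measurable (fun x' => 2 * (H (pt k x x') + H (pt (k + 1) x x'))) :=
          fun k x => ((hm1 k x).add (hm1 (k+1) x)).const_mul 2
        have hm1'' : ∀ k x, Measurable (fun x' => H (pt k x x') + H (pt (k + 1) x x')) :=
          fun k x => (hm1 k x).add (hm1 (k+1) x)
        have hm2' : ∀ k, Measurable (fun x => 2 * (∫⁻ x', H (pt k x x') ∂P + ∫⁻ x', H (pt (k + 1) x x') ∂P)) :=
          fun k => ((hm2 k).add (hm2 (k+1))).const_mul 2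
        have hm2'' : ∀ k, Measurable (fun x => ∫⁻ x', H (pt k x x') ∂P + ∫⁻ x', H (pt (k + 1) x x') ∂P) :=
          fun k => (hm2 k).add (hm2 (k+1))
        have : ∀ x, ∫⁻ x', K * ∑ k ∈ Finset.range K, 2 * (H (pt k x x') + H (pt (k + 1) x x')) ∂P
            = K * ∑ k ∈ Finset.range K, 2 * (∫⁻ x', H (pt k x x') ∂P + ∫⁻ x', H (pt (k + 1) x x') ∂P) := by
          intro x
          rw [lintegral_const_mul _ (Finset.measurable_fun_sum _ fun k _ => hm1' k x),
            lintegral_finsetSum _ fun k _ => hm1' k x]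
          congr 1
          apply Finset.sum_congr rfl
          intro k _
          rw [lintegral_const_mul _ (hm1'' k x), lintegral_add_left (hm1 k x)]
        simp_rw [this]
        rw [lintegral_const_mul _ (Finset.measurable_fun_sum _ fun k _ => hm2' k),
            lintegral_finsetSum _ fun k _ => hm2' k]
        congr 1
        apply Finset.sum_congr rfl
        intro k _
        rw [lintegral_const_mul _ (hm2'' k), lintegral_add_left (hm2 k)]
    _ ≤ K * ∑ k ∈ Finset.range K, 2 * (C * I + C * I) := by
        gcongr with k hk k hk
        · exact hA2 k (Finset.mem_range.1 hk).le
        · exact hA2 (k + 1) (Finset.mem_range.1 hk)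
    _ = _ := by
        rw [Finset.sum_const, Finset.card_range, nsmul_eq_mul]
        have : ENNReal.ofReal (Lam / lam * K ^ (d + 2)) = C * (K * K) := by
          rw [hC, ← ENNReal.ofReal_natCast, ← ENNReal.ofReal_mul (by positivity),
            ← ENNReal.ofReal_mul (by positivity)]
          congr 1
          ring
        rw [this]
        ring

lemma qot_A4 {E : Type*} [PseudoMetricSpace E] [MeasurableSpace E] [OpensMeasurableSpace E]
    (P Q : Measure E) [IsProbabilityMeasure P] [IsProbabilityMeasure Q]
    (a b : E → ℝ) (ha : Measurable a) (hb : Measurable b) (S : Set (E × E)) (hS : MeasurableSet S)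
    (Ω' : Set E) (hQΩ : ∀ᵐ y ∂Q, y ∈ Ω')
    (r : ℝ) (p : ℝ≥0∞)
    (h : ∀ y ∈ Ω', ∃ x0, p ≤ P (ball x0 r) ∧ ∀ x ∈ ball x0 r, (x, y) ∈ S) :
    p * ∫⁻ z, ENNReal.ofReal ((a z.1 + b z.2) ^ 2) ∂(P.prod Q) ≤
     2 * (∫⁻ x, ∫⁻ x', ENNReal.ofReal ((a x - a x') ^ 2) ∂P ∂P +
      ∫⁻ z, S.indicator (fun z => ENNReal.ofReal ((a z.1 + b z.2) ^ 2)) z ∂(P.prod Q)) := by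
  have hind : Measurable (S.indicator (fun z : E × E => ENNReal.ofReal ((a z.1 + b z.2) ^ 2))) := by
    apply Measurable.indicator _ hS
    fun_prop
  have hpt : ∀ y ∈ Ω', p * ∫⁻ x, ENNReal.ofReal ((a x + b y) ^ 2) ∂P ≤
      2 * (∫⁻ x, ∫⁻ x', ENNReal.ofReal ((a x - a x') ^ 2) ∂P ∂P +
        ∫⁻ x, S.indicator (fun z => ENNReal.ofReal ((a z.1 + b z.2) ^ 2)) (x, y) ∂P) := by
    intro y hy
    obtain ⟨x0, hp, hx0⟩ := h y hy
    have hpx : ∀ x, p * ENNReal.ofReal ((a x + b y) ^ 2) ≤ 2 * (∫⁻ x', ENNReal.ofReal ((a x - a x') ^ 2) ∂P +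
        ∫⁻ x, S.indicator (fun z => ENNReal.ofReal ((a z.1 + b z.2) ^ 2)) (x, y) ∂P) := by
      intro x
      calc _ ≤ ENNReal.ofReal ((a x + b y) ^ 2) * P (ball x0 r) := by rw [mul_comm]; gcongr
        _ = ∫⁻ x' in ball x0 r, ENNReal.ofReal ((a x + b y) ^ 2) ∂P := by rw [setLIntegral_const]
        _ ≤ ∫⁻ x' in ball x0 r, 2 * (ENNReal.ofReal ((a x - a x') ^ 2) +
            S.indicator (fun z => ENNReal.ofReal ((a z.1 + b z.2) ^ 2)) (x', y)) ∂P := by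
          apply setLIntegral_mono' measurableSet_ball
          intro x' hx'
          rw [Set.indicator_of_mem (hx0 x' hx')]
          have := qot_sq_two (a x - a x') (-(a x' + b y))
          rw [neg_sq] at this
          convert this using 3
          ring
        _ ≤ ∫⁻ x', 2 * (ENNReal.ofReal ((a x - a x') ^ 2) +
            S.indicator (fun z => ENNReal.ofReal ((a z.1 + b z.2) ^ 2)) (x', y)) ∂P :=
          setLIntegral_le_lintegral _ _
        _ = _ := by
          have hh : Measurable fun x' => S.indicator (fun z => ENNReal.ofReal ((a z.1 + b z.2) ^ 2)) (x', y) :=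
            hind.comp (measurable_prodMk_right (y := y))
          have hh2 : Measurable fun x' => ENNReal.ofReal ((a x - a x') ^ 2) +
              S.indicator (fun z => ENNReal.ofReal ((a z.1 + b z.2) ^ 2)) (x', y) :=
            Measurable.add (by fun_prop) hh
          rw [lintegral_const_mul _ hh2, lintegral_add_left (by fun_prop)]
    have hm : Measurable fun x => ∫⁻ x', ENNReal.ofReal ((a x - a x') ^ 2) ∂P :=
      Measurable.lintegral_prod_right' (f := fun z : E × E => ENNReal.ofReal ((a z.1 - a z.2) ^ 2))
        (by fun_prop)
    calc _ = ∫⁻ x, p * ENNReal.ofReal ((a x + b y) ^ 2) ∂P := by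
          rw [lintegral_const_mul _ (by fun_prop)]
      _ ≤ _ := lintegral_mono hpx
      _ = _ := by
          rw [lintegral_const_mul _ (hm.add_const _), lintegral_add_left hm]
          simp
  rw [lintegral_prod_symm' _ (by fun_prop), lintegral_prod_symm' _ hind,
    ← lintegral_const_mul _ (Measurable.lintegral_prod_left' (f := fun z : E × E => ENNReal.ofReal ((a z.1 + b z.2) ^ 2)) (by fun_prop))]
  have hm3 := hind.lintegral_prod_left' (μ := P)
  calc _ ≤ ∫⁻ y, 2 * (∫⁻ x, ∫⁻ x', ENNReal.ofReal ((a x - a x') ^ 2) ∂P ∂P +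
        ∫⁻ x, S.indicator (fun z => ENNReal.ofReal ((a z.1 + b z.2) ^ 2)) (x, y) ∂P) ∂Q := by
        apply lintegral_mono_ae
        filter_upwards [hQΩ] with y hy
        exact hpt y hy
    _ = _ := by
      rw [lintegral_const_mul _ (hm3.const_add _), lintegral_add_right _ hm3]
      simp

lemma qot_poinc {d : ℕ} (Ω Ω' : Set (EuclideanSpace ℝ (Fin d))) (hΩm : MeasurableSet Ω)
    (hconv : Convex ℝ Ω) (P Q : Measure (EuclideanSpace ℝ (Fin d))) [IsProbabilityMeasure P]
    [IsProbabilityMeasure Q]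
    (lam Lam : ℝ) (hlam : 0 < lam) (hLam : lam ≤ Lam)
    (hPu : P ≤ ENNReal.ofReal Lam • volume.restrict Ω)
    (hPl : ENNReal.ofReal lam • volume.restrict Ω ≤ P)
    (hPΩ : ∀ᵐ x ∂P, x ∈ Ω) (hQΩ : ∀ᵐ y ∂Q, y ∈ Ω')
    (a b : EuclideanSpace ℝ (Fin d) → ℝ) (ha : Measurable a) (hb : Measurable b)
    (S : Set (EuclideanSpace ℝ (Fin d) × EuclideanSpace ℝ (Fin d))) (hS : MeasurableSet S)
    (p q : ℝ) (hp : 0 ≤ p) (hq : 0 ≤ q) (hq1 : q ≤ 1)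
    (K : ℕ) (hK : 1 ≤ K) (r : ℝ) (hr0 : 0 ≤ r) (hr : ∀ x ∈ Ω, ∀ x' ∈ Ω, dist x x' ≤ K * r)
    (hS1 : ∀ u ∈ Ω, ∃ y0, ENNReal.ofReal q ≤ Q (ball y0 r) ∧
      ∀ v ∈ Ω, dist u v ≤ r → ∀ y ∈ ball y0 r, (v, y) ∈ S)
    (hS2 : ∀ y ∈ Ω', ∃ x0, ENNReal.ofReal p ≤ P (ball x0 r) ∧ ∀ x ∈ ball x0 r, (x, y) ∈ S)
    (hint : Integrable (fun z : EuclideanSpace ℝ (Fin d) × EuclideanSpace ℝ (Fin d) =>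
      (a z.1 + b z.2) ^ 2) (P.prod Q)) :
    p * q * ∫ z, (a z.1 + b z.2) ^ 2 ∂(P.prod Q) ≤
      10 * (Lam / lam * (K : ℝ) ^ (d + 2)) * ∫ z in S, (a z.1 + b z.2) ^ 2 ∂(P.prod Q) := by
  have hind : Measurable (S.indicator (fun z : EuclideanSpace ℝ (Fin d) × EuclideanSpace ℝ (Fin d) =>
      ENNReal.ofReal ((a z.1 + b z.2) ^ 2))) := by
    apply Measurable.indicator _ hS
    fun_prop
  set W := Lam / lam * (K : ℝ) ^ (d + 2) with hW
  have hW1 : 1 ≤ W := by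
    have : 1 ≤ Lam / lam := by rwa [one_le_div hlam]
    have h2 : (1 : ℝ) ≤ (K : ℝ) ^ (d + 2) := one_le_pow₀ (by exact_mod_cast hK)
    nlinarith
  have h3 := qot_A3 Ω hΩm hconv P lam Lam hlam hLam hPu hPl hPΩ
    (fun x => ∫⁻ y, S.indicator (fun z => ENNReal.ofReal ((a z.1 + b z.2) ^ 2)) (x, y) ∂Q)
    hind.lintegral_prod_right' a (ENNReal.ofReal q) K hK r hr (by
      intro u hu v hv huv
      obtain ⟨y0, h1, h2⟩ := hS1 u hu
      exact qot_A1 Q a b hb S r (ENNReal.ofReal q) u v y0 h1 (h2 u hu (by simpa using hr0)) (h2 v hv huv))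
  have h4 := qot_A4 P Q a b ha hb S hS Ω' hQΩ r (ENNReal.ofReal p) hS2
  rw [← lintegral_prod _ hind.aemeasurable] at h3
  set I := ∫⁻ z, S.indicator (fun z => ENNReal.ofReal ((a z.1 + b z.2) ^ 2)) z ∂(P.prod Q) with hI
  set V := ∫⁻ x, ∫⁻ x', ENNReal.ofReal ((a x - a x') ^ 2) ∂P ∂P
  have hI2 : I = ENNReal.ofReal (∫ z in S, (a z.1 + b z.2) ^ 2 ∂(P.prod Q)) := by
    rw [hI, lintegral_indicator hS, ofReal_integral_eq_lintegral_ofReal hint.integrableOn]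
    exact Filter.Eventually.of_forall fun z => sq_nonneg _
  rw [← ofReal_integral_eq_lintegral_ofReal hint (Filter.Eventually.of_forall fun z => sq_nonneg _)] at h4
  set N := ∫ z, (a z.1 + b z.2) ^ 2 ∂(P.prod Q)
  have hJ : 0 ≤ ∫ z in S, (a z.1 + b z.2) ^ 2 ∂(P.prod Q) := integral_nonneg fun z => sq_nonneg _
  set J := ∫ z in S, (a z.1 + b z.2) ^ 2 ∂(P.prod Q)
  have h5 : ENNReal.ofReal (p * q * N) ≤ ENNReal.ofReal (10 * W * J) := by
    calc ENNReal.ofReal (p * q * N) = ENNReal.ofReal q * (ENNReal.ofReal p * ENNReal.ofReal N) := by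
          rw [← ENNReal.ofReal_mul hp, ← ENNReal.ofReal_mul hq]; congr 1; ring
      _ ≤ ENNReal.ofReal q * (2 * (V + I)) := by gcongr
      _ = 2 * (ENNReal.ofReal q * V + ENNReal.ofReal q * I) := by ring
      _ ≤ 2 * (4 * ENNReal.ofReal W * I + ENNReal.ofReal W * I) := by
          refine mul_le_mul_right (add_le_add h3 ?_) _
          gcongr
          linarith
      _ = 10 * ENNReal.ofReal W * I := by ring
      _ = _ := by
          have hW0 : 0 ≤ W := by linarith
          rw [hI2, ← ENNReal.ofReal_ofNat 10, ← ENNReal.ofReal_mul (by norm_num),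
            ← ENNReal.ofReal_mul (by linarith)]
  exact (ENNReal.ofReal_le_ofReal_iff (by positivity)).1 h5

lemma qot_ptwise (s M X h : ℝ) (hs : 0 ≤ s) (hsM : s ≤ M) (hM : 0 < M) (hh : |h| ≤ M) (hX : s ≤ X) :
    s / M * h ^ 2 ≤ (max (X + h) 0 - max X 0) * h := by
  rw [max_eq_left (hs.trans hX)]
  have h1 : s / M ≤ 1 := by rwa [div_le_one hM]
  rcases le_total 0 (X + h) with h0 | h0
  · rw [max_eq_left h0]
    nlinarith [sq_nonneg h]
  · rw [max_eq_right h0, div_mul_eq_mul_div, div_le_iff₀ hM]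
    have : h ≤ 0 := by linarith
    rw [abs_of_nonpos this] at hh
    nlinarith [mul_nonneg (sub_nonneg.2 hh) hs, mul_nonneg (sub_nonneg.2 hX) hM.le, mul_nonneg (neg_nonneg.2 this) (mul_nonneg (sub_nonneg.2 hh) hs), mul_nonneg (neg_nonneg.2 this) (mul_nonneg (sub_nonneg.2 hX) hM.le)]

lemma qot_ptwise0 (X h : ℝ) : 0 ≤ (max (X + h) 0 - max X 0) * h := by
  rcases le_total 0 h with h0 | h0
  · exact mul_nonneg (sub_nonneg.2 (max_le_max_right _ (by linarith))) h0
  · exact mul_nonneg_of_nonpos_of_nonpos (sub_nonpos.2 (max_le_max_right _ (by linarith))) h0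

lemma qot_lipmax (X h : ℝ) : |max (X + h) 0 - max X 0| ≤ |h| := by
  have := abs_max_sub_max_le_abs (X + h) X 0
  simpa using this

lemma qot_quad {E : Type*} [MeasurableSpace E] (P : Measure E) (a D : E → ℝ) (κ : ℝ)
    (iaa : Integrable (fun x => a x * a x) P) (iaD : Integrable (fun x => a x * D x) P)
    (iDD : Integrable (fun x => D x * D x) P) :
    0 ≤ ∫ x, a x * a x ∂P - 2 * κ * ∫ x, a x * D x ∂P + κ ^ 2 * ∫ x, D x * D x ∂P := by
  have i2 : Integrable (fun x => a x * a x - 2 * κ * (a x * D x)) P := iaa.sub (iaD.const_mul _)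
  rw [← integral_const_mul, ← integral_const_mul, ← integral_sub iaa (iaD.const_mul _),
    ← integral_add i2 (iDD.const_mul _)]
  apply integral_nonneg
  intro x
  simp only [Pi.zero_apply]
  nlinarith [sq_nonneg (a x - κ * D x)]

lemma qot_main0 {E : Type*} [MeasurableSpace E]
    (P Q : Measure E) [IsProbabilityMeasure P] [IsProbabilityMeasure Q]
    (a b : E → ℝ) (ha : Measurable a) (hb : Measurable b)
    (Ca Cb : ℝ) (hCa : ∀ᵐ x ∂P, |a x| ≤ Ca) (hCb : ∀ᵐ y ∂Q, |b y| ≤ Cb)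
    (hb0 : ∫ y, b y ∂Q = 0)
    (X : E × E → ℝ) (hX : Measurable X) (s M G : ℝ) (hs : 0 < s) (hsM : s ≤ M)
    (hG : 0 ≤ G)
    (hM : ∀ᵐ z ∂(P.prod Q), |a z.1 + b z.2| ≤ M)
    (hpoin : ∫ z, (a z.1 + b z.2) ^ 2 ∂(P.prod Q) ≤
      G * ∫ z in {z | s ≤ X z}, (a z.1 + b z.2) ^ 2 ∂(P.prod Q)) :
    Real.sqrt (∫ z, (a z.1 + b z.2) ^ 2 ∂(P.prod Q)) ≤ G * M / s *
      Real.sqrt (∫ x, (∫ y, (max (X (x, y) + (a x + b y)) 0 - max (X (x, y)) 0) ∂Q) ^ 2 ∂P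
       + ∫ y, (∫ x, (max (X (x, y) + (a x + b y)) 0 - max (X (x, y)) 0) ∂P) ^ 2 ∂Q) := by
  have hM0 : 0 < M := hs.trans_le hsM
  set Z : E × E → ℝ := fun z => max (X z + (a z.1 + b z.2)) 0 - max (X z) 0 with hZ
  have hZm : Measurable Z := by fun_prop
  set D1 : E → ℝ := fun x => ∫ y, Z (x, y) ∂Q with hD1
  set D2 : E → ℝ := fun y => ∫ x, Z (x, y) ∂P with hD2
  have hD1m : Measurable D1 := hZm.stronglyMeasurable.integral_prod_right'.measurable
  have hD2m : Measurable D2 := hZm.stronglyMeasurable.integral_prod_left'.measurable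
  have hZb : ∀ x y, |a x| ≤ Ca → |b y| ≤ Cb → |Z (x, y)| ≤ Ca + Cb := by
    intro x y h1 h2
    exact (qot_lipmax _ _).trans ((abs_add_le _ _).trans (add_le_add h1 h2))
  have hD1b : ∀ᵐ x ∂P, |D1 x| ≤ Ca + Cb := by
    filter_upwards [hCa] with x hx
    have := norm_integral_le_of_norm_le_const (μ := Q) (f := fun y => Z (x, y)) (C := Ca + Cb)
      (by filter_upwards [hCb] with y hy; exact hZb x y hx hy)
    simpa using this
  have hD2b : ∀ᵐ y ∂Q, |D2 y| ≤ Ca + Cb := by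
    filter_upwards [hCb] with y hy
    have := norm_integral_le_of_norm_le_const (μ := P) (f := fun x => Z (x, y)) (C := Ca + Cb)
      (by filter_upwards [hCa] with x hx; exact hZb x y hx hy)
    simpa using this
  have ha' : ∀ᵐ z ∂(P.prod Q), |a z.1| ≤ Ca :=
    Measure.quasiMeasurePreserving_fst.ae hCa
  have hb' : ∀ᵐ z ∂(P.prod Q), |b z.2| ≤ Cb :=
    Measure.quasiMeasurePreserving_snd.ae hCb
  have hmulb : ∀ {u v A B : ℝ}, |u| ≤ A → |v| ≤ B → ‖u * v‖ ≤ A * B := by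
    intro u v A B h1 h2
    rw [Real.norm_eq_abs, abs_mul]
    exact mul_le_mul h1 h2 (abs_nonneg _) ((abs_nonneg _).trans h1)
  have iab : ∀ {μ : Measure E} [IsProbabilityMeasure μ] {u v : E → ℝ} {A B : ℝ}, Measurable u →
      Measurable v → (∀ᵐ x ∂μ, |u x| ≤ A) → (∀ᵐ x ∂μ, |v x| ≤ B) →
      Integrable (fun x => u x * v x) μ := by
    intro μ _ u v A B hu hv h1 h2
    refine Integrable.of_bound (hu.mul hv).aestronglyMeasurable (A * B) ?_
    filter_upwards [h1, h2] with x h1 h2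
    exact hmulb h1 h2
  have iab2 : ∀ {u v : E × E → ℝ} {A B : ℝ}, Measurable u →
      Measurable v → (∀ᵐ x ∂(P.prod Q), |u x| ≤ A) → (∀ᵐ x ∂(P.prod Q), |v x| ≤ B) →
      Integrable (fun x => u x * v x) (P.prod Q) := by
    intro u v A B hu hv h1 h2
    refine Integrable.of_bound (hu.mul hv).aestronglyMeasurable (A * B) ?_
    filter_upwards [h1, h2] with x h1 h2
    exact hmulb h1 h2
  have hZb' : ∀ᵐ z ∂(P.prod Q), |Z z| ≤ Ca + Cb := by
    filter_upwards [ha', hb'] with z h1 h2 using hZb z.1 z.2 h1 h2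
  have ham : Measurable fun z : E × E => a z.1 := by fun_prop
  have hbm : Measurable fun z : E × E => b z.2 := by fun_prop
  have iZa := iab2 hZm ham hZb' ha'
  have iZb := iab2 hZm hbm hZb' hb'
  have hhm : Measurable fun z : E × E => a z.1 + b z.2 := by fun_prop
  have ihh := iab2 hhm hhm hM hM
  have iZh := iab2 hZm hhm hZb' hM
  -- (i)
  have hSm : MeasurableSet {z | s ≤ X z} := measurableSet_le measurable_const hX
  have step1 : s / M * ∫ z in {z | s ≤ X z}, (a z.1 + b z.2) ^ 2 ∂(P.prod Q) ≤
      ∫ z, Z z * (a z.1 + b z.2) ∂(P.prod Q) := by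
    rw [← integral_const_mul, ← integral_indicator hSm]
    apply integral_mono_ae _ iZh
    · filter_upwards [hM] with z hz
      by_cases hzS : s ≤ X z
      · rw [Set.indicator_of_mem (show z ∈ {z | s ≤ X z} from hzS)]
        exact qot_ptwise s M (X z) _ hs.le hsM hM0 hz hzS
      · rw [Set.indicator_of_notMem (show z ∉ {z | s ≤ X z} from hzS)]
        exact qot_ptwise0 _ _
    · apply Integrable.indicator _ hSm
      apply Integrable.const_mul
      simpa only [sq] using ihh
  have step2 : ∫ z, Z z * (a z.1 + b z.2) ∂(P.prod Q) = ∫ x, a x * D1 x ∂P + ∫ y, b y * D2 y ∂Q := by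
    simp_rw [mul_add]
    rw [integral_add iZa iZb, integral_prod _ iZa, integral_prod_symm _ iZb]
    congr 1
    · congr 1; ext x
      simp only [hD1]
      rw [← integral_const_mul]
      congr 1; ext y; ring
    · congr 1; ext x
      simp only [hD2]
      rw [← integral_const_mul]
      congr 1; ext y; ring
  have iaa := iab ha ha hCa hCa
  have ibb := iab hb hb hCb hCb
  have iaD := iab ha hD1m hCa hD1b
  have ibD := iab hb hD2m hCb hD2b
  have iDD1 := iab hD1m hD1m hD1b hD1b
  have iDD2 := iab hD2m hD2m hD2b hD2b
  have iaa' := iab2 ham ham ha' ha'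
  have ibb' := iab2 hbm hbm hb' hb'
  have iab' := iab2 ham hbm ha' hb'
  have step3 : ∫ z, (a z.1 + b z.2) ^ 2 ∂(P.prod Q) = ∫ x, a x * a x ∂P + ∫ y, b y * b y ∂Q := by
    have e : ∀ z : E × E, (a z.1 + b z.2) ^ 2 = a z.1 * a z.1 + b z.2 * b z.2 + 2 * (a z.1 * b z.2) := by
      intro z; ring
    simp_rw [e]
    have i2 : Integrable (fun z : E × E => a z.1 * a z.1 + b z.2 * b z.2) (P.prod Q) := iaa'.add ibb'
    rw [integral_add i2 (iab'.const_mul 2), integral_add iaa' ibb', integral_const_mul,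
      integral_prod_mul a b, hb0]
    rw [integral_fun_fst (fun x => a x * a x), integral_fun_snd (fun x => b x * b x)]
    simp
  set κ := G * M / s with hκ
  have hκ0 : 0 ≤ κ := by positivity
  have q1 : 0 ≤ ∫ x, a x * a x ∂P - 2 * κ * ∫ x, a x * D1 x ∂P + κ ^ 2 * ∫ x, D1 x * D1 x ∂P := by
    exact qot_quad P a D1 κ iaa iaD iDD1
  have q2 : 0 ≤ ∫ x, b x * b x ∂Q - 2 * κ * ∫ x, b x * D2 x ∂Q + κ ^ 2 * ∫ x, D2 x * D2 x ∂Q := by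
    exact qot_quad Q b D2 κ ibb ibD iDD2
  rw [step2] at step1
  have e1 : ∫ x, D1 x ^ 2 ∂P = ∫ x, D1 x * D1 x ∂P := by simp_rw [sq]
  have e2 : ∫ x, D2 x ^ 2 ∂Q = ∫ x, D2 x * D2 x ∂Q := by simp_rw [sq]
  set N := ∫ z, (a z.1 + b z.2) ^ 2 ∂(P.prod Q)
  set J := ∫ z in {z | s ≤ X z}, (a z.1 + b z.2) ^ 2 ∂(P.prod Q)
  have key : N ≤ κ * (∫ x, a x * D1 x ∂P + ∫ y, b y * D2 y ∂Q) := by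
    calc N ≤ G * J := hpoin
      _ = κ * (s / M * J) := by rw [hκ]; field_simp
      _ ≤ _ := by gcongr
  have fin : N ≤ κ ^ 2 * (∫ x, D1 x ^ 2 ∂P + ∫ y, D2 y ^ 2 ∂Q) := by
    rw [e1, e2]; nlinarith
  calc √N ≤ √(κ ^ 2 * (∫ x, D1 x ^ 2 ∂P + ∫ y, D2 y ^ 2 ∂Q)) := Real.sqrt_le_sqrt fin
    _ = _ := by rw [Real.sqrt_mul (by positivity), Real.sqrt_sq hκ0]

lemma qot_main1 {E : Type*} [MeasurableSpace E]
    (P Q : Measure E) [IsProbabilityMeasure P] [IsProbabilityMeasure Q]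
    (a b : E → ℝ) (ha : Measurable a) (hb : Measurable b)
    (Ca Cb : ℝ) (hCa : ∀ᵐ x ∂P, |a x| ≤ Ca) (hCb : ∀ᵐ y ∂Q, |b y| ≤ Cb)
    (X : E × E → ℝ) (hX : Measurable X) (s M G : ℝ) (hs : 0 < s) (hsM : s ≤ M)
    (hG : 0 ≤ G)
    (hM : ∀ᵐ z ∂(P.prod Q), |a z.1 + b z.2| ≤ M)
    (hpoin : ∫ z, (a z.1 + b z.2) ^ 2 ∂(P.prod Q) ≤
      G * ∫ z in {z | s ≤ X z}, (a z.1 + b z.2) ^ 2 ∂(P.prod Q)) :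
    Real.sqrt (∫ z, (a z.1 + b z.2) ^ 2 ∂(P.prod Q)) ≤ G * M / s *
      Real.sqrt (∫ x, (∫ y, (max (X (x, y) + (a x + b y)) 0 - max (X (x, y)) 0) ∂Q) ^ 2 ∂P
       + ∫ y, (∫ x, (max (X (x, y) + (a x + b y)) 0 - max (X (x, y)) 0) ∂P) ^ 2 ∂Q) := by
  set t := ∫ y, b y ∂Q with ht
  have e : ∀ x y, a x + t + (b y - t) = a x + b y := by intro x y; ring
  have hib : Integrable b Q := Integrable.of_bound hb.aestronglyMeasurable Cb hCb
  have := qot_main0 P Q (fun x => a x + t) (fun y => b y - t) (ha.add_const t) (hb.sub_const t)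
    (Ca + |t|) (Cb + |t|)
    (by filter_upwards [hCa] with x hx; exact (abs_add_le _ _).trans (by linarith))
    (by filter_upwards [hCb] with x hx; exact (abs_sub _ _).trans (by linarith))
    (by rw [integral_sub hib (integrable_const _)]; simp [ht]) X hX s M G hs hsM hG
  simp only [e] at this
  exact this hM hpoin

lemma qot_inf_pos {E : Type*} [PseudoMetricSpace E] [MeasurableSpace E]
    (Q : Measure E) [IsProbabilityMeasure Q] (Ω' : Set E) (hc : IsCompact Ω') (hne : Ω'.Nonempty)
    (hQball : ∀ y ∈ Ω', ∀ r > 0, 0 < Q (ball y r)) (r : ℝ) (hr : 0 < r) :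
    0 < ⨅ y : Ω', (Q (ball (y : E) r)).toReal := by
  obtain ⟨t, hts, htf, hcov⟩ := hc.finite_cover_balls (half_pos hr)
  have htne : t.Nonempty := by
    obtain ⟨y, hy⟩ := hne
    have := hcov hy
    simp only [Set.mem_iUnion] at this
    obtain ⟨i, hi, _⟩ := this
    exact ⟨i, hi⟩
  obtain ⟨y0, hy0, hmin⟩ := Set.exists_min_image t (fun y => (Q (ball y (r / 2))).toReal) htf htne
  have hpos : 0 < (Q (ball y0 (r / 2))).toReal :=
    ENNReal.toReal_pos (hQball y0 (hts hy0) _ (half_pos hr)).ne' (measure_ne_top _ _)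
  have : Nonempty Ω' := hne.to_subtype
  refine hpos.trans_le (le_ciInf ?_)
  rintro ⟨y, hy⟩
  have := hcov hy
  simp only [Set.mem_iUnion] at this
  obtain ⟨i, hi, hyi⟩ := this
  refine (hmin i hi).trans ?_
  apply ENNReal.toReal_mono (measure_ne_top _ _)
  apply measure_mono
  apply ball_subset_ball'
  rw [mem_ball, dist_comm] at hyi
  linarith

/-- Error bound for the QOT dual (first half of Theorem 2.4). -/
theorem error_bound_QOT_dual
    (d : ℕ) (hd : 1 ≤ d) (ε : ℝ) (hε : 0 < ε)
    (Ω Ω' : Set (EuclideanSpace ℝ (Fin d)))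
    (hΩc : IsCompact Ω) (hΩconv : Convex ℝ Ω) (hΩne : Ω.Nonempty)
    (hΩ'c : IsCompact Ω') (hΩ'ne : Ω'.Nonempty)
    (P Q : Measure (EuclideanSpace ℝ (Fin d)))
    [IsProbabilityMeasure P] [IsProbabilityMeasure Q]
    (ρ : EuclideanSpace ℝ (Fin d) → ℝ) (hρm : Measurable ρ)
    (lamP LamP : ℝ) (hlam : 0 < lamP)
    (hPdef : P = (volume.restrict Ω).withDensity fun x => ENNReal.ofReal (ρ x))
    (hρlb : ∀ x ∈ Ω, lamP ≤ ρ x) (hρub : ∀ x ∈ Ω, ρ x ≤ LamP)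
    (hQsupp : Q Ω'ᶜ = 0) (hQball : ∀ y ∈ Ω', ∀ r > 0, 0 < Q (Metric.ball y r))
    (c : EuclideanSpace ℝ (Fin d) → EuclideanSpace ℝ (Fin d) → ℝ)
    (L : ℝ) (hL : 0 < L)
    (hc : LipschitzWith (Real.toNNReal L) (Function.uncurry c))
    (δP : ℝ) (hδP0 : 0 < δP) (hδP1 : δP ≤ 1)
    (hδP : ∀ r > 0, ∀ x ∈ Ω, ENNReal.ofReal (δP * min (r ^ d) 1) ≤ P (Metric.ball x r))
    (fStar gStar : EuclideanSpace ℝ (Fin d) → ℝ)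
    (hfsLip : LipschitzOnWith (Real.toNNReal L) fStar Ω)
    (hgsLip : LipschitzOnWith (Real.toNNReal L) gStar Ω')
    (hFOC1 : ∀ x ∈ Ω, ∫ y, max (fStar x + gStar y - c x y) 0 ∂Q = ε)
    (hFOC2 : ∀ y ∈ Ω', ∫ x, max (fStar x + gStar y - c x y) 0 ∂P = ε)
    (f g : EuclideanSpace ℝ (Fin d) → ℝ) (hfm : Measurable f) (hgm : Measurable g)
    (Cf : ℝ) (hfb : ∀ x ∈ Ω, |f x| ≤ Cf) (Cg : ℝ) (hgb : ∀ y ∈ Ω', |g y| ≤ Cg) :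
    Real.sqrt (∫ p, (f p.1 + g p.2 - (fStar p.1 + gStar p.2)) ^ 2 ∂(P.prod Q)) ≤
      gammaEps ε L δP lamP LamP Ω Ω' Q *
        max (essSup (fun p => |f p.1 + g p.2 - (fStar p.1 + gStar p.2)|) (P.prod Q)) ε *
        Real.sqrt ((∫ x, (D1Gamma ε Q c f g x) ^ 2 ∂P) + ∫ y, (D2Gamma ε P c f g y) ^ 2 ∂Q) := by
  classical
  obtain ⟨F, hFL, hFeq⟩ := hfsLip.extend_real
  obtain ⟨G, hGL, hGeq⟩ := hgsLip.extend_real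
  have hΩm : MeasurableSet Ω := hΩc.measurableSet
  have hLam : lamP ≤ LamP := by
    obtain ⟨x, hx⟩ := hΩne
    exact (hρlb x hx).trans (hρub x hx)
  have hLam0 : 0 < LamP := hlam.trans_le hLam
  have hΩae : ∀ᵐ x ∂(volume.restrict Ω), x ∈ Ω := ae_restrict_mem hΩm
  have hPu : P ≤ ENNReal.ofReal LamP • volume.restrict Ω := by
    rw [hPdef, ← withDensity_const]
    apply withDensity_mono
    filter_upwards [hΩae] with x hx
    exact ENNReal.ofReal_le_ofReal (hρub x hx)
  have hPl : ENNReal.ofReal lamP • volume.restrict Ω ≤ P := by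
    rw [hPdef, ← withDensity_const]
    apply withDensity_mono
    filter_upwards [hΩae] with x hx
    exact ENNReal.ofReal_le_ofReal (hρlb x hx)
  have hPΩ : ∀ᵐ x ∂P, x ∈ Ω := by
    rw [hPdef]
    exact (withDensity_absolutelyContinuous _ _).ae_le hΩae
  have hQΩ : ∀ᵐ y ∂Q, y ∈ Ω' := by
    rw [ae_iff]
    exact hQsupp
  set r := ε / (8 * L) with hr
  have hr0 : 0 < r := by positivity
  set q := ⨅ y : Ω', (Q (Metric.ball (y : EuclideanSpace ℝ (Fin d)) r)).toReal with hqdef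
  have hq0 : 0 < q := qot_inf_pos Q Ω' hΩ'c hΩ'ne hQball r hr0
  have hqle : ∀ y ∈ Ω', ENNReal.ofReal q ≤ Q (ball y r) := by
    intro y hy
    apply ENNReal.ofReal_le_of_le_toReal
    exact ciInf_le (f := fun y : Ω' => (Q (Metric.ball (y : EuclideanSpace ℝ (Fin d)) r)).toReal)
      ⟨0, by rintro _ ⟨y, rfl⟩; exact ENNReal.toReal_nonneg⟩ ⟨y, hy⟩
  have hq1 : q ≤ 1 := by
    obtain ⟨y, hy⟩ := hΩ'ne
    have := (hqle y hy).trans prob_le_one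
    simpa using this
  set p := δP * min (r ^ d) 1 with hpdef
  have hp0 : 0 < p := by positivity
  -- the number of steps
  have hdiam : 0 < Metric.diam Ω := by
    by_contra hcon
    have h0 : Metric.diam Ω = 0 := le_antisymm (not_lt.1 hcon) Metric.diam_nonneg
    have hsub : Ω.Subsingleton := by
      intro x hx y hy
      have := Metric.dist_le_diam_of_mem hΩc.isBounded hx hy
      rw [h0] at this
      exact dist_le_zero.1 this
    have : Nonempty (Fin d) := ⟨⟨0, hd⟩⟩
    have hv : volume Ω = 0 := hsub.measure_zero _
    have h1 : P Set.univ ≤ (ENNReal.ofReal LamP • volume.restrict Ω) Set.univ := hPu Set.univ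
    simp [hv] at h1
  set K : ℕ := ⌈8 * L * Metric.diam Ω / ε⌉₊ with hKdef
  have hK : 1 ≤ K := Nat.ceil_pos.2 (by positivity)
  have hKcast : (⌈8 * L * Metric.diam Ω / ε⌉ : ℝ) = (K : ℝ) :=
    (natCast_ceil_eq_intCast_ceil (by positivity)).symm
  have hKr : ∀ x ∈ Ω, ∀ x' ∈ Ω, dist x x' ≤ K * r := by
    intro x hx x' hx'
    refine (Metric.dist_le_diam_of_mem hΩc.isBounded hx hx').trans ?_
    have : 8 * L * Metric.diam Ω / ε ≤ K := Nat.le_ceil _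
    rw [div_le_iff₀ hε] at this
    rw [hr, ← mul_div_assoc, le_div_iff₀ (by positivity)]
    linarith
  -- the slack function
  have hLc : ((Real.toNNReal L : NNReal) : ℝ) = L := Real.coe_toNNReal L hL.le
  have hccont : Continuous (fun z : EuclideanSpace ℝ (Fin d) × EuclideanSpace ℝ (Fin d) => c z.1 z.2) :=
    hc.continuous
  set X : EuclideanSpace ℝ (Fin d) × EuclideanSpace ℝ (Fin d) → ℝ :=
    fun z => F z.1 + G z.2 - c z.1 z.2 with hX
  have hFc := hFL.continuous
  have hGc := hGL.continuous
  have hXc : Continuous X := by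
    simp only [hX]
    fun_prop
  have hvar : ∀ x y x' y', dist x x' ≤ r → dist y y' ≤ r → ε ≤ X (x, y) → 5 * ε / 8 ≤ X (x', y') := by
    intro x y x' y' hx hy hXe
    have h1 := hFL.dist_le_mul x x'
    have h2 := hGL.dist_le_mul y y'
    have h3 := hc.dist_le_mul (x, y) (x', y')
    rw [hLc, Real.dist_eq] at h1 h2 h3
    have h4 : dist (x, y) (x', y') ≤ r := by
      rw [Prod.dist_eq]; exact max_le hx hy
    simp only [Function.uncurry] at h3
    have hLr : L * r = ε / 8 := by rw [hr]; field_simp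
    have k1 := h1.trans (mul_le_mul_of_nonneg_left hx hL.le)
    have k2 := h2.trans (mul_le_mul_of_nonneg_left hy hL.le)
    have k3 := h3.trans (mul_le_mul_of_nonneg_left h4 hL.le)
    rw [hLr, abs_le] at k1 k2 k3
    simp only [hX] at hXe ⊢
    linarith [k1.1, k1.2, k2.1, k2.2, k3.1, k3.2]
  -- bounds
  obtain ⟨Cc, hCc⟩ := (hΩc.prod hΩ'c).exists_bound_of_continuousOn hccont.continuousOn
  obtain ⟨CF, hCF⟩ := hΩc.exists_bound_of_continuousOn hFc.continuousOn
  obtain ⟨CG, hCG⟩ := hΩ'c.exists_bound_of_continuousOn hGc.continuousOn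
  have hcb : ∀ x ∈ Ω, ∀ y ∈ Ω', |c x y| ≤ Cc := fun x hx y hy => hCc (x, y) ⟨hx, hy⟩
  have hmaxb : ∀ u v w A B C : ℝ, |u| ≤ A → |v| ≤ B → |w| ≤ C → ‖max (u + v - w) 0‖ ≤ A + B + C := by
    intro u v w A B C h1 h2 h3
    rw [Real.norm_eq_abs, abs_of_nonneg (le_max_right _ _)]
    rw [abs_le] at h1 h2 h3
    exact max_le (by linarith [h1.2, h2.2, h3.1]) (by linarith [h1.1, h1.2, h2.1, h2.2, h3.1, h3.2])
  have hint1 : ∀ (φ ψ : EuclideanSpace ℝ (Fin d) → ℝ) (A B : ℝ), Measurable φ → Measurable ψ →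
      (∀ x ∈ Ω, |φ x| ≤ A) → (∀ y ∈ Ω', |ψ y| ≤ B) → ∀ x ∈ Ω,
      Integrable (fun y => max (φ x + ψ y - c x y) 0) Q := by
    intro φ ψ A B h1 h2 h3 h4 x hx
    have hm : Measurable fun y => c x y :=
      (hccont.comp (Continuous.prodMk_right x)).measurable
    refine Integrable.of_bound (Measurable.aestronglyMeasurable (by fun_prop)) (A + B + Cc) ?_
    filter_upwards [hQΩ] with y hy
    exact hmaxb _ _ _ _ _ _ (h3 x hx) (h4 y hy) (hcb x hx y hy)
  have hint2 : ∀ (φ ψ : EuclideanSpace ℝ (Fin d) → ℝ) (A B : ℝ), Measurable φ → Measurable ψ →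
      (∀ x ∈ Ω, |φ x| ≤ A) → (∀ y ∈ Ω', |ψ y| ≤ B) → ∀ y ∈ Ω',
      Integrable (fun x => max (φ x + ψ y - c x y) 0) P := by
    intro φ ψ A B h1 h2 h3 h4 y hy
    have hm : Measurable fun x => c x y :=
      (hccont.comp (Continuous.prodMk_left y)).measurable
    refine Integrable.of_bound (Measurable.aestronglyMeasurable (by fun_prop)) (A + B + Cc) ?_
    filter_upwards [hPΩ] with x hx
    exact hmaxb _ _ _ _ _ _ (h3 x hx) (h4 y hy) (hcb x hx y hy)
  have hF1 : ∀ x ∈ Ω, ∫ y, max (X (x, y)) 0 ∂Q = ε := by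
    intro x hx
    rw [← hFOC1 x hx]
    apply integral_congr_ae
    filter_upwards [hQΩ] with y hy
    simp only [hX, hFeq hx, hGeq hy]
  have hF2 : ∀ y ∈ Ω', ∫ x, max (X (x, y)) 0 ∂P = ε := by
    intro y hy
    rw [← hFOC2 y hy]
    apply integral_congr_ae
    filter_upwards [hPΩ] with x hx
    simp only [hX, hFeq hx, hGeq hy]
  have iX1 : ∀ x ∈ Ω, Integrable (fun y => max (X (x, y)) 0) Q :=
    hint1 F G CF CG hFc.measurable hGc.measurable hCF hCG
  have iX2 : ∀ y ∈ Ω', Integrable (fun x => max (X (x, y)) 0) P :=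
    hint2 F G CF CG hFc.measurable hGc.measurable hCF hCG
  have hex1 : ∀ x ∈ Ω, ∃ y ∈ Ω', ε ≤ X (x, y) := by
    intro x hx
    obtain ⟨y, hy, hle⟩ := exists_notMem_null_integral_le (iX1 x hx) hQsupp
    rw [hF1 x hx] at hle
    refine ⟨y, by simpa using hy, ?_⟩
    rcases le_max_iff.1 hle with h | h
    · exact h
    · linarith
  have hex2 : ∀ y ∈ Ω', ∃ x ∈ Ω, ε ≤ X (x, y) := by
    intro y hy
    obtain ⟨x, hx, hle⟩ := exists_notMem_null_integral_le (iX2 y hy) (show P Ωᶜ = 0 from hPΩ)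
    rw [hF2 y hy] at hle
    refine ⟨x, by simpa using hx, ?_⟩
    rcases le_max_iff.1 hle with h | h
    · exact h
    · linarith
  -- the differences
  set a : EuclideanSpace ℝ (Fin d) → ℝ := fun x => f x - F x with hadef
  set b : EuclideanSpace ℝ (Fin d) → ℝ := fun y => g y - G y with hbdef
  have ham : Measurable a := hfm.sub hFc.measurable
  have hbm : Measurable b := hgm.sub hGc.measurable
  have hCa : ∀ᵐ x ∂P, |a x| ≤ Cf + CF := by
    filter_upwards [hPΩ] with x hx
    exact (abs_sub _ _).trans (add_le_add (hfb x hx) (hCF x hx))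
  have hCb : ∀ᵐ y ∂Q, |b y| ≤ Cg + CG := by
    filter_upwards [hQΩ] with x hx
    exact (abs_sub _ _).trans (add_le_add (hgb x hx) (hCG x hx))
  have hΩΩ : ∀ᵐ z ∂(P.prod Q), z.1 ∈ Ω ∧ z.2 ∈ Ω' :=
    (Measure.quasiMeasurePreserving_fst.ae hPΩ).and (Measure.quasiMeasurePreserving_snd.ae hQΩ)
  have hhb : ∀ᵐ z ∂(P.prod Q), |a z.1 + b z.2| ≤ Cf + CF + (Cg + CG) := by
    filter_upwards [Measure.quasiMeasurePreserving_fst.ae hCa,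
      Measure.quasiMeasurePreserving_snd.ae hCb] with z h1 h2
    exact (abs_add_le _ _).trans (add_le_add h1 h2)
  have heq : ∀ᵐ z ∂(P.prod Q), f z.1 + g z.2 - (fStar z.1 + gStar z.2) = a z.1 + b z.2 := by
    filter_upwards [hΩΩ] with z hz
    simp only [hadef, hbdef, hFeq hz.1, hGeq hz.2]
    ring
  have hI : ∫ z, (f z.1 + g z.2 - (fStar z.1 + gStar z.2)) ^ 2 ∂(P.prod Q) =
      ∫ z, (a z.1 + b z.2) ^ 2 ∂(P.prod Q) := by
    apply integral_congr_ae
    filter_upwards [heq] with z hz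
    rw [hz]
  have hE : essSup (fun z => |f z.1 + g z.2 - (fStar z.1 + gStar z.2)|) (P.prod Q) =
      essSup (fun z => |a z.1 + b z.2|) (P.prod Q) := by
    apply essSup_congr_ae
    filter_upwards [heq] with z hz
    rw [hz]
  rw [hI, hE]
  set M := max (essSup (fun z => |a z.1 + b z.2|) (P.prod Q)) ε with hMdef
  have hM : ∀ᵐ z ∂(P.prod Q), |a z.1 + b z.2| ≤ M := by
    have hbd : Filter.IsBoundedUnder (· ≤ ·) (ae (P.prod Q)) (fun z => |a z.1 + b z.2|) :=
      ⟨_, by simpa using hhb⟩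
    filter_upwards [ae_le_essSup hbd] with z hz
    exact hz.trans (le_max_left _ _)
  have hMε : ε ≤ M := le_max_right _ _
  have hint : Integrable (fun z : EuclideanSpace ℝ (Fin d) × EuclideanSpace ℝ (Fin d) =>
      (a z.1 + b z.2) ^ 2) (P.prod Q) := by
    refine Integrable.of_bound (Measurable.aestronglyMeasurable (by fun_prop)) (M ^ 2) ?_
    filter_upwards [hM] with z hz
    rw [Real.norm_eq_abs, abs_pow]
    gcongr
  have hpo := qot_poinc Ω Ω' hΩm hΩconv P Q lamP LamP hlam hLam hPu hPl hPΩ hQΩ a b ham hbm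
    {z | 5 * ε / 8 ≤ X z} (measurableSet_le measurable_const hXc.measurable) p q hp0.le hq0.le hq1
    K hK r hr0.le hKr
    (by
      intro u hu
      obtain ⟨y0, hy0, hXe⟩ := hex1 u hu
      refine ⟨y0, hqle y0 hy0, ?_⟩
      intro v _ huv y hy
      exact hvar u y0 v y huv (by rw [dist_comm]; exact (mem_ball.1 hy).le) hXe)
    (by
      intro y hy
      obtain ⟨x0, hx0, hXe⟩ := hex2 y hy
      refine ⟨x0, hδP r hr0 x0 hx0, ?_⟩
      intro x hx
      exact hvar x0 y x y (by rw [dist_comm]; exact (mem_ball.1 hx).le) (by simpa using hr0.le) hXe)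
    hint
  set W := LamP / lamP * (K : ℝ) ^ (d + 2) with hW
  have hW0 : 0 < W := by
    have : (0 : ℝ) < K := by exact_mod_cast hK
    positivity
  have hmain := qot_main1 P Q a b ham hbm _ _ hCa hCb X hXc.measurable (5 * ε / 8) M
    (10 * W / (p * q)) (by positivity) (by linarith) (by positivity) hM (by
      rw [div_mul_eq_mul_div, le_div_iff₀ (by positivity)]
      linarith)
  have hXab : ∀ x y, X (x, y) + (a x + b y) = f x + g y - c x y := by
    intro x y; simp only [hX, hadef, hbdef]; ring
  simp only [hXab] at hmain
  have hD1 : ∫ x, (D1Gamma ε Q c f g x) ^ 2 ∂P = (1 / ε) ^ 2 *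
      ∫ x, (∫ y, (max (f x + g y - c x y) 0 - max (X (x, y)) 0) ∂Q) ^ 2 ∂P := by
    rw [← integral_const_mul]
    apply integral_congr_ae
    filter_upwards [hPΩ] with x hx
    rw [integral_sub (hint1 f g Cf Cg hfm hgm hfb hgb x hx) (iX1 x hx), hF1 x hx, D1Gamma]
    field_simp
    ring
  have hD2 : ∫ y, (D2Gamma ε P c f g y) ^ 2 ∂Q = (1 / ε) ^ 2 *
      ∫ y, (∫ x, (max (f x + g y - c x y) 0 - max (X (x, y)) 0) ∂P) ^ 2 ∂Q := by
    rw [← integral_const_mul]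
    apply integral_congr_ae
    filter_upwards [hQΩ] with y hy
    rw [integral_sub (hint2 f g Cf Cg hfm hgm hfb hgb y hy) (iX2 y hy), hF2 y hy, D2Gamma]
    field_simp
    ring
  rw [hD1, hD2, ← mul_add, Real.sqrt_mul (by positivity), Real.sqrt_sq (by positivity)]
  refine hmain.trans ?_
  rw [← mul_assoc (_ * M)]
  refine mul_le_mul_of_nonneg_right ?_ (Real.sqrt_nonneg _)
  have hpinv : δP⁻¹ * (max (8 * L / ε) 1) ^ d = p⁻¹ := by
    have e1 : 8 * L / ε = r⁻¹ := by rw [hr, inv_div]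
    rw [hpdef, mul_inv, e1]
    congr 1
    rcases le_total r 1 with h | h
    · rw [min_eq_left (pow_le_one₀ hr0.le h), max_eq_left ((one_le_inv₀ hr0).2 h), inv_pow]
    · rw [min_eq_right (one_le_pow₀ h), max_eq_right (inv_le_one_of_one_le₀ h)]
      simp
  have hgam : 16 * W / (p * q) ≤ gammaEps ε L δP lamP LamP Ω Ω' Q := by
    rw [gammaEps, hpinv, hKcast, ← hr, ← hqdef]
    have hR : LamP / lamP ≤ LamP ^ 2 / lamP ^ 2 := by
      rw [← div_pow]
      exact le_self_pow₀ (by rwa [one_le_div hlam]) (by norm_num)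
    calc 16 * W / (p * q) = 16 * p⁻¹ * (LamP / lamP) * (K : ℝ) ^ (d + 2) / q := by
          rw [hW]; field_simp
      _ ≤ _ := by gcongr
  calc 10 * W / (p * q) * M / (5 * ε / 8) = 16 * W / (p * q) * M * (1 / ε) := by
        field_simp; ring
    _ ≤ _ := by
        have : 0 ≤ M := hε.le.trans hMε
        gcongr
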